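/- arXiv:2211.04919 — 4 statements merged into one kernel-verified Lean document; each statement's English description precedes it below -/
import Mathlib

section
/- Suppose there exist a real number ρ > 0 and a strictly positive continuous function h : X → ℝ such that B_q(h) = ρ·h. Then (1/N)·log(B_q^N(1)(x)) converges to log ρ as N → ∞, uniformly in x ∈ X; that is, sup_{x∈X} |(1/N)·log(B_q^N(1)(x)) − log ρ| → 0 as N → ∞. (Here B_q^N denotes the N-th iterate of B_q and 1 the constant function one; note B_q^N(1)(x) ≥ (inf_{x∈X} q_x(Θ))^N > 0, so the logarithm is defined.) -/
open MeasureTheory Filter Topology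

variable {X Θ : Type*}

/-- The `N`-th iterate of the transfer operator `B_q` of the IFSm `(X, τ, q)`. -/
noncomputable def transferIter [MeasurableSpace Θ] (q : X → Measure Θ) (τ : Θ → X → X) :
    ℕ → (X → ℝ) → X → ℝ
  | 0 => fun f => f
  | N + 1 => fun f x => ∫ θ, transferIter q τ N f (τ θ x) ∂(q x)

/-!
The transfer operator is linear and monotone, so iterating it on `m ≤ h ≤ M` gives
`m * B_q^N(1) ≤ ρ ^ N * h ≤ M * B_q^N(1)`. Hence `log B_q^N(1)` differs from `N * log ρ` by at most
`log M - log m`, which vanishes uniformly after division by `N`.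
-/

theorem abs_log_div_natCast_sub_log_le {a ρ m M : ℝ} {N : ℕ} (hN : N ≠ 0) (hρ : 0 < ρ)
    (hm : 0 < m) (hM : 0 < M) (hlower : m * ρ ^ N ≤ M * a) (hupper : m * a ≤ M * ρ ^ N) :
    |Real.log a / N - Real.log ρ| ≤ (Real.log M - Real.log m) / N := by
  have ha : 0 < a := pos_of_mul_pos_right ((by positivity : 0 < m * ρ ^ N).trans_le hlower) hM.le
  have hlog_lower := Real.log_le_log (by positivity) hlower
  have hlog_upper := Real.log_le_log (by positivity) hupper
  rw [Real.log_mul hm.ne' (by positivity), Real.log_mul hM.ne' (by positivity), Real.log_pow]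
    at hlog_lower hlog_upper
  have hN' : (0 : ℝ) < N := by positivity
  rw [div_sub' hN'.ne', abs_div, abs_of_pos hN']
  gcongr
  rw [abs_le]
  constructor <;> linarith

section Iterates

variable [MeasurableSpace Θ] {q : X → Measure Θ} {τ : Θ → X → X} {f g h : X → ℝ}
  {ρ m M : ℝ}

theorem transferIter_const_mul (c : ℝ) (f : X → ℝ) (N : ℕ) (x : X) :
    transferIter q τ N (fun y => c * f y) x = c * transferIter q τ N f x := by
  induction N generalizing x with
  | zero => rfl
  | succ N ih => simp only [transferIter, ih, integral_const_mul]

theorem transferIter_const (c : ℝ) (N : ℕ) (x : X) :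
    transferIter q τ N (fun _ => c) x = c * transferIter q τ N (fun _ => 1) x := by
  simpa only [mul_one] using transferIter_const_mul (q := q) (τ := τ) c (fun _ => 1) N x

theorem transferIter_eigenfunction (heig : ∀ x, ∫ θ, h (τ θ x) ∂(q x) = ρ * h x) (N : ℕ) (x : X) :
    transferIter q τ N h x = ρ ^ N * h x := by
  induction N generalizing x with
  | zero => simp only [transferIter, pow_zero, one_mul]
  | succ N ih => simp only [transferIter, ih, integral_const_mul, heig, pow_succ, mul_assoc]

theorem transferIter_nonneg (hf : ∀ x, 0 ≤ f x) (N : ℕ) (x : X) : 0 ≤ transferIter q τ N f x := by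
  induction N generalizing x with
  | zero => exact hf x
  | succ N ih => exact integral_nonneg fun θ => ih (τ θ x)

theorem transferIter_mono (hf : ∀ x, 0 ≤ f x) (hfg : ∀ x, f x ≤ g x)
    (hg : ∀ n x, Integrable (fun θ => transferIter q τ n g (τ θ x)) (q x)) (N : ℕ) (x : X) :
    transferIter q τ N f x ≤ transferIter q τ N g x := by
  induction N generalizing x with
  | zero => exact hfg x
  | succ N ih =>
    exact integral_mono_of_nonneg (.of_forall fun θ => transferIter_nonneg hf N (τ θ x)) (hg N x)
      (.of_forall fun θ => ih (τ θ x))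

theorem integrable_comp_of_eigenfunction (hρ : ρ ≠ 0) (hh : ∀ x, h x ≠ 0)
    (heig : ∀ x, ∫ θ, h (τ θ x) ∂(q x) = ρ * h x) (x : X) :
    Integrable (fun θ => h (τ θ x)) (q x) :=
  .of_integral_ne_zero (heig x ▸ mul_ne_zero hρ (hh x))

theorem measure_univ_le_of_eigenfunction (hρ : 0 < ρ) (hm : 0 < m) (hmh : ∀ x, m ≤ h x)
    (hhM : ∀ x, h x ≤ M) (heig : ∀ x, ∫ θ, h (τ θ x) ∂(q x) = ρ * h x) (x : X) :
    q x Set.univ ≤ ENNReal.ofReal (ρ * M) / ENNReal.ofReal m := by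
  have hpos (y : X) : 0 < h y := hm.trans_le (hmh y)
  rw [ENNReal.le_div_iff_mul_le (.inl (ENNReal.ofReal_pos.2 hm).ne')
    (.inl ENNReal.ofReal_ne_top), mul_comm]
  calc ENNReal.ofReal m * q x Set.univ
      = ∫⁻ _, ENNReal.ofReal m ∂(q x) := (lintegral_const _).symm
    _ ≤ ∫⁻ θ, ENNReal.ofReal (h (τ θ x)) ∂(q x) :=
        lintegral_mono fun θ => ENNReal.ofReal_le_ofReal (hmh (τ θ x))
    _ = ENNReal.ofReal (∫ θ, h (τ θ x) ∂(q x)) :=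
        (ofReal_integral_eq_lintegral_ofReal
          (integrable_comp_of_eigenfunction hρ.ne' (fun y => (hpos y).ne') heig x)
          (.of_forall fun θ => (hpos (τ θ x)).le)).symm
    _ ≤ ENNReal.ofReal (ρ * M) := by
        rw [heig]
        gcongr
        exact hhM x

theorem integrable_transferIter_comp_of_eigenfunction (hρ : ρ ≠ 0) (hh : ∀ x, h x ≠ 0)
    (heig : ∀ x, ∫ θ, h (τ θ x) ∂(q x) = ρ * h x) (N : ℕ) (x : X) :
    Integrable (fun θ => transferIter q τ N h (τ θ x)) (q x) := by
  simpa only [transferIter_eigenfunction heig] using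
    (integrable_comp_of_eigenfunction hρ hh heig x).const_mul (ρ ^ N)

theorem mul_transferIter_one_le (hρ : ρ ≠ 0) (hm : 0 < m) (hmh : ∀ x, m ≤ h x)
    (heig : ∀ x, ∫ θ, h (τ θ x) ∂(q x) = ρ * h x) (N : ℕ) (x : X) :
    m * transferIter q τ N (fun _ => 1) x ≤ ρ ^ N * h x := by
  rw [← transferIter_const, ← transferIter_eigenfunction heig]
  exact transferIter_mono (fun _ => hm.le) hmh
    (integrable_transferIter_comp_of_eigenfunction hρ (fun y => (hm.trans_le (hmh y)).ne') heig) N x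

end Iterates

section Kernel

open ProbabilityTheory

variable [MeasurableSpace X] [MeasurableSpace Θ] {κ : Kernel X Θ} {τ : Θ → X → X}
  {f g h : X → ℝ} {ρ m M : ℝ}

theorem measurable_transferIter [IsSFiniteKernel κ] (hτ : Measurable (Function.uncurry τ))
    (hf : Measurable f) (N : ℕ) : Measurable (transferIter κ τ N f) := by
  induction N with
  | zero => exact hf
  | succ N ih =>
    exact (StronglyMeasurable.integral_kernel_prod_right' (κ := κ)
      (ih.comp (hτ.comp measurable_swap)).stronglyMeasurable).measurable

theorem integrable_transferIter_comp_of_le [IsSFiniteKernel κ]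
    (hτ : Measurable (Function.uncurry τ)) (hf : Measurable f) (hf₀ : ∀ x, 0 ≤ f x)
    (hfg : ∀ x, f x ≤ g x)
    (hg : ∀ n x, Integrable (fun θ => transferIter κ τ n g (τ θ x)) (κ x)) (N : ℕ) (x : X) :
    Integrable (fun θ => transferIter κ τ N f (τ θ x)) (κ x) := by
  refine (hg N x).mono' ?_ (.of_forall fun θ => ?_)
  · exact ((measurable_transferIter hτ hf N).comp hτ.of_uncurry_right).aestronglyMeasurable
  · rw [Real.norm_of_nonneg (transferIter_nonneg hf₀ N _)]
    exact transferIter_mono hf₀ hfg hg N _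

theorem isFiniteKernel_of_eigenfunction (hρ : 0 < ρ) (hm : 0 < m) (hmh : ∀ x, m ≤ h x)
    (hhM : ∀ x, h x ≤ M) (heig : ∀ x, ∫ θ, h (τ θ x) ∂(κ x) = ρ * h x) : IsFiniteKernel κ :=
  ⟨_, ENNReal.div_lt_top ENNReal.ofReal_ne_top (ENNReal.ofReal_pos.2 hm).ne',
    measure_univ_le_of_eigenfunction hρ hm hmh hhM heig⟩

theorem le_mul_transferIter_one (hτ : Measurable (Function.uncurry τ)) (hρ : 0 < ρ) (hm : 0 < m)
    (hmh : ∀ x, m ≤ h x) (hhM : ∀ x, h x ≤ M)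
    (heig : ∀ x, ∫ θ, h (τ θ x) ∂(κ x) = ρ * h x) (N : ℕ) (x : X) :
    ρ ^ N * h x ≤ M * transferIter κ τ N (fun _ => 1) x := by
  have hpos (y : X) : 0 < h y := hm.trans_le (hmh y)
  have : IsFiniteKernel κ := isFiniteKernel_of_eigenfunction hρ hm hmh hhM heig
  have hm_int := integrable_transferIter_comp_of_le hτ measurable_const (fun _ => hm.le) hmh
    (integrable_transferIter_comp_of_eigenfunction hρ.ne' (fun y => (hpos y).ne') heig)
  have hM_int (n : ℕ) (y : X) :
      Integrable (fun θ => transferIter κ τ n (fun _ => M) (τ θ y)) (κ y) := by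
    have hone_int := hm_int n y
    simp only [transferIter_const m, integrable_const_mul_iff hm.ne'.isUnit] at hone_int
    simpa only [transferIter_const M] using hone_int.const_mul M
  rw [← transferIter_const, ← transferIter_eigenfunction heig]
  exact transferIter_mono (fun y => (hpos y).le) hhM hM_int N x

theorem abs_log_transferIter_one_div_sub_log_le (hτ : Measurable (Function.uncurry τ))
    (hρ : 0 < ρ) (hm : 0 < m) (hmh : ∀ x, m ≤ h x) (hhM : ∀ x, h x ≤ M)
    (heig : ∀ x, ∫ θ, h (τ θ x) ∂(κ x) = ρ * h x) {N : ℕ} (hN : N ≠ 0) (x : X) :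
    |Real.log (transferIter κ τ N (fun _ => 1) x) / N - Real.log ρ| ≤
      (Real.log M - Real.log m) / N := by
  refine abs_log_div_natCast_sub_log_le hN hρ hm (hm.trans_le ((hmh x).trans (hhM x))) ?_ ?_
  · calc m * ρ ^ N ≤ h x * ρ ^ N := by gcongr; exact hmh x
      _ = ρ ^ N * h x := mul_comm _ _
      _ ≤ _ := le_mul_transferIter_one hτ hρ hm hmh hhM heig N x
  · calc _ ≤ ρ ^ N * h x := mul_transferIter_one_le hρ.ne' hm hmh heig N x
      _ = h x * ρ ^ N := mul_comm _ _
      _ ≤ M * ρ ^ N := by gcongr; exact hhM x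

end Kernel

theorem log_transfer_iter_one_tendsto_log_spectral_radius_general
    [MeasurableSpace X] [MeasurableSpace Θ] {τ : Θ → X → X} (hτ : Measurable (Function.uncurry τ))
    {κ : ProbabilityTheory.Kernel X Θ} {ρ : ℝ} (hρ : 0 < ρ) {h : X → ℝ}
    (hpos : ∃ m, 0 < m ∧ ∀ x, m ≤ h x) (hbdd : BddAbove (Set.range h))
    (heig : ∀ x, ∫ θ, h (τ θ x) ∂(κ x) = ρ * h x) :
    Tendsto
      (fun N : ℕ =>
        ⨆ x : X, |Real.log (transferIter κ τ N (fun _ => 1) x) / N - Real.log ρ|)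
      atTop (𝓝 0) := by
  rcases isEmpty_or_nonempty X with _ | _
  · simp only [Real.iSup_of_isEmpty, tendsto_const_nhds]
  obtain ⟨m, hm, hmh⟩ := hpos
  obtain ⟨M, hM⟩ := hbdd
  have hhM (x : X) : h x ≤ M := hM (Set.mem_range_self x)
  refine squeeze_zero' (.of_forall fun N => Real.iSup_nonneg fun x => abs_nonneg _) ?_
    (tendsto_const_div_atTop_nhds_zero_nat (Real.log M - Real.log m))
  filter_upwards [eventually_ne_atTop 0] with N hN
  exact ciSup_le (abs_log_transferIter_one_div_sub_log_le hτ hρ hm hmh hhM heig hN)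

/-- If `B_q(h) = ρ h` for some `ρ > 0` and strictly positive continuous `h`, then
`(1/N) log(B_q^N(1)(x)) → log ρ` uniformly in `x`. -/
theorem log_transfer_iter_one_tendsto_log_spectral_radius
    [MetricSpace X] [CompactSpace X] [MeasurableSpace X] [BorelSpace X]
    [MetricSpace Θ] [CompactSpace Θ] [MeasurableSpace Θ] [BorelSpace Θ]
    (τ : Θ → X → X) (hτ : Continuous fun p : Θ × X => τ p.1 p.2)
    (q : X → Measure Θ)
    (hqfin : ∃ C : ENNReal, C < ⊤ ∧ ∀ x, q x Set.univ ≤ C)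
    (hqpos : ∃ c : ENNReal, 0 < c ∧ ∀ x, c ≤ q x Set.univ)
    (hqmeas : ∀ A : Set Θ, MeasurableSet A → Measurable fun x => q x A)
    (hqcont : ∀ g : C(Θ, ℝ), Continuous fun x => ∫ θ, g θ ∂(q x))
    (ρ : ℝ) (hρ : 0 < ρ) (h : C(X, ℝ)) (hh : ∀ x, 0 < h x)
    (heig : ∀ x, ∫ θ, h (τ θ x) ∂(q x) = ρ * h x) :
    Tendsto
      (fun N : ℕ =>
        ⨆ x : X, |Real.log (transferIter q τ N (fun _ => 1) x) / N - Real.log ρ|)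
      atTop (𝓝 0) := by
  have hpos : ∃ m, 0 < m ∧ ∀ x, m ≤ h x := by
    simpa using isCompact_univ.exists_forall_le' h.continuous.continuousOn fun x _ => hh x
  exact log_transfer_iter_one_tendsto_log_spectral_radius_general
    (κ := ⟨q, Measure.measurable_of_measurable_coe q hqmeas⟩) hτ.measurable hρ hpos
    (isCompact_range h.continuous).bddAbove heig
end

section
/- Assume X and Θ are nonempty. There exist a real number ρ > 0 and a Borel probability measure ν on X such that ∫_X B_q(f) dν = ρ·∫_X f dν for every f ∈ C(X,ℝ) (i.e., ν is an eigenmeasure of the Markov operator L_q, dual to B_q, with eigenvalue ρ). Moreover ρ^N ≤ ‖B_q^N(1)‖_∞ for every N ≥ 1, so ρ is at most the spectral radius of B_q. -/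
open MeasureTheory Filter Topology

variable {X Θ : Type*}

/-!
For a positive operator `B` on `C(X, ℝ)`, let `r` be the infimum of the `l` for which some strictly
positive `u` satisfies `B u ≤ l u`. By a minimum principle no `f` satisfies `B f < r f` everywhere,
so every function in the range of `B - r` has a nonnegative supremum. Extending the zero functional from this range, dominated by `f ↦ sup f`,
gives by Hahn–Banach a normalized positive functional `φ` with `φ ∘ B = r φ`, and the
Riesz–Markov–Kakutani theorem turns `φ` into an eigenmeasure `ν`. Then `r ^ N = ∫ B ^ N 1 dν` lies
between the infimum and the supremum of `B ^ N 1`.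
-/

section PositiveOperator

variable [TopologicalSpace X]

/-- The Collatz–Wielandt set of a positive operator `B` on `C(X, ℝ)`: all `l` such that `B u ≤ l u`
for some strictly positive `u`. -/
def collatzWielandtSet (B : C(X, ℝ) →ₚ[ℝ] C(X, ℝ)) : Set ℝ :=
  {l | ∃ u : C(X, ℝ), (∀ x, 0 < u x) ∧ ∀ x, B u x ≤ l * u x}

/-- The (upper) Collatz–Wielandt number of a positive operator on `C(X, ℝ)`, which serves as the
eigenvalue of its dual. -/
noncomputable def collatzWielandtNumber (B : C(X, ℝ) →ₚ[ℝ] C(X, ℝ)) : ℝ :=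
  sInf (collatzWielandtSet B)

theorem collatzWielandtSet_nonempty [CompactSpace X] (B : C(X, ℝ) →ₚ[ℝ] C(X, ℝ)) :
    (collatzWielandtSet B).Nonempty :=
  ⟨‖B 1‖, 1, fun _ => one_pos, fun x => by simpa using (B 1).apply_le_norm x⟩

theorem bddBelow_collatzWielandtSet [Nonempty X] (B : C(X, ℝ) →ₚ[ℝ] C(X, ℝ)) :
    BddBelow (collatzWielandtSet B) := by
  refine ⟨0, ?_⟩
  rintro l ⟨u, hu, hBu⟩
  obtain ⟨x⟩ := ‹Nonempty X›
  have hBu_nonneg : 0 ≤ B u := map_nonneg B fun y => (hu y).le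
  exact nonneg_of_mul_nonneg_left ((hBu_nonneg x).trans (hBu x)) (hu x)

theorem isGLB_collatzWielandtNumber [CompactSpace X] [Nonempty X]
    (B : C(X, ℝ) →ₚ[ℝ] C(X, ℝ)) : IsGLB (collatzWielandtSet B) (collatzWielandtNumber B) :=
  isGLB_csInf (collatzWielandtSet_nonempty B) (bddBelow_collatzWielandtSet B)

theorem pos_of_mem_collatzWielandtSet_of_map_lt [CompactSpace X] (B : C(X, ℝ) →ₚ[ℝ] C(X, ℝ)) {l : ℝ}
    (hl : l ∈ collatzWielandtSet B) {f : C(X, ℝ)} (hf : ∀ x, B f x < l * f x) (x : X) :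
    0 < f x := by
  obtain ⟨u, hu, hBu⟩ := hl
  have : Nonempty X := ⟨x⟩
  -- At a minimum point of `f / u` with value `t ≤ 0`, the bound `t u ≤ f` contradicts `B f < l f`.
  obtain ⟨x₀, -, hx₀⟩ := isCompact_univ.exists_isMinOn Set.univ_nonempty
    (f.continuous.div₀ u.continuous fun y => (hu y).ne').continuousOn
  set t : ℝ := f x₀ / u x₀
  have hmin (y : X) : t ≤ f y / u y := hx₀ (Set.mem_univ y)
  by_contra! hfx
  have ht : t ≤ 0 := (hmin x).trans (div_nonpos_of_nonpos_of_nonneg hfx (hu x).le)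
  have htu : t • u ≤ f := fun y => (le_div_iff₀ (hu y)).mp (hmin y)
  have : l * f x₀ ≤ B f x₀ := calc
    l * f x₀ = t * (l * u x₀) := by rw [← div_mul_cancel₀ (f x₀) (hu x₀).ne']; ring
    _ ≤ t * B u x₀ := mul_le_mul_of_nonpos_left (hBu x₀) ht
    _ = B (t • u) x₀ := by rw [map_smul]; rfl
    _ ≤ B f x₀ := OrderHomClass.mono B htu x₀
  exact (hf x₀).not_ge this

theorem eventually_forall_lt_mul [CompactSpace X] {f g : C(X, ℝ)} {r : ℝ}
    (h : ∀ x, g x < r * f x) : ∀ᶠ s in 𝓝 r, ∀ x, g x < s * f x := by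
  have hlt (x : X) : ∀ᶠ p : ℝ × X in 𝓝 (r, x), g p.2 < p.1 * f p.2 :=
    ContinuousAt.eventually_lt (by fun_prop) (by fun_prop) (h x)
  simpa using isCompact_univ.eventually_forall_of_forall_eventually fun x _ => hlt x

theorem exists_collatzWielandtNumber_mul_le [CompactSpace X] [Nonempty X]
    (B : C(X, ℝ) →ₚ[ℝ] C(X, ℝ)) (f : C(X, ℝ)) :
    ∃ x, collatzWielandtNumber B * f x ≤ B f x := by
  by_contra! hf
  have hglb := isGLB_collatzWielandtNumber B
  have hnear := eventually_forall_lt_mul hf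
  have hfreq := (hglb.frequently_mem (collatzWielandtSet_nonempty B)).filter_mono nhdsWithin_le_nhds
  obtain ⟨l, hl, hfl⟩ := (hfreq.and_eventually hnear).exists
  have hfpos := pos_of_mem_collatzWielandtSet_of_map_lt B hl hfl
  obtain ⟨s, hs, hfs⟩ := hnear.exists_lt
  exact (hglb.1 ⟨f, hfpos, fun x => (hfs x).le⟩).not_gt hs

theorem exists_positive_functional_vanishing_on [CompactSpace X] (V : Submodule ℝ C(X, ℝ))
    (hV : ∀ f ∈ V, ∃ x, 0 ≤ f x) :
    ∃ φ : C(X, ℝ) →ₚ[ℝ] ℝ, φ 1 = 1 ∧ ∀ f ∈ V, φ f = 0 := by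
  have : Nonempty X := (hV 0 V.zero_mem).nonempty
  have hle (f : C(X, ℝ)) (x : X) : f x ≤ ⨆ y, f y :=
    le_ciSup (isCompact_range f.continuous).bddAbove x
  obtain ⟨φ, hφV, hφ⟩ := exists_extension_of_le_sublinear ⟨V, 0⟩ (fun f : C(X, ℝ) => ⨆ x, f x)
    (fun c hc f => (Real.mul_iSup_of_nonneg hc.le f).symm)
    (fun f g => ciSup_le fun x => add_le_add (hle f x) (hle g x))
    (fun f => let ⟨x, hx⟩ := hV f f.2; hx.trans (hle f x))
  have hφ_nonneg (f : C(X, ℝ)) (hf : 0 ≤ f) : 0 ≤ φ f := by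
    have : φ (-f) ≤ 0 := (hφ (-f)).trans (ciSup_le fun x => neg_nonpos.mpr (hf x))
    simpa using this
  have hφ_one : φ 1 = 1 := by
    have hle_one : φ 1 ≤ 1 := by simpa using hφ 1
    have hneg : φ (-1) ≤ -1 := by simpa using hφ (-1)
    rw [map_neg] at hneg
    linarith
  exact ⟨.mk₀ φ hφ_nonneg, hφ_one, fun f hf => hφV ⟨f, hf⟩⟩

theorem exists_eigenfunctional [CompactSpace X] [Nonempty X] (B : C(X, ℝ) →ₚ[ℝ] C(X, ℝ)) :
    ∃ φ : C(X, ℝ) →ₚ[ℝ] ℝ, φ 1 = 1 ∧ ∀ f, φ (B f) = collatzWielandtNumber B * φ f := by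
  let T : C(X, ℝ) →ₗ[ℝ] C(X, ℝ) := B.toLinearMap - collatzWielandtNumber B • LinearMap.id
  have hT : ∀ g ∈ T.range, ∃ x, 0 ≤ g x := by
    rintro _ ⟨f, rfl⟩
    obtain ⟨x, hx⟩ := exists_collatzWielandtNumber_mul_le B f
    exact ⟨x, sub_nonneg.mpr hx⟩
  obtain ⟨φ, hφ_one, hφT⟩ := exists_positive_functional_vanishing_on T.range hT
  refine ⟨φ, hφ_one, fun f => ?_⟩
  have hφTf : φ (B f - collatzWielandtNumber B • f) = 0 := hφT _ ⟨f, rfl⟩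
  rwa [map_sub, map_smul, smul_eq_mul, sub_eq_zero] at hφTf

end PositiveOperator

section ContinuousMapIntegral

variable [TopologicalSpace X] [CompactSpace X] [MeasurableSpace X] [OpensMeasurableSpace X]

theorem integrable_continuousMap (μ : Measure X) [IsFiniteMeasure μ] (f : C(X, ℝ)) :
    Integrable f μ :=
  f.continuous.integrable_of_hasCompactSupport (.of_compactSpace f)

theorem integral_continuousMap_le_iSup (μ : Measure X) [IsProbabilityMeasure μ] (f : C(X, ℝ)) :
    ∫ x, f x ∂μ ≤ ⨆ x, f x :=
  let ⟨x, hx⟩ := exists_integral_le (integrable_continuousMap μ f)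
  hx.trans (le_ciSup (isCompact_range f.continuous).bddAbove x)

end ContinuousMapIntegral

section Eigenmeasure

variable [TopologicalSpace X] [CompactSpace X] [T2Space X] [MeasurableSpace X] [BorelSpace X]

theorem exists_isFiniteMeasure_integral_eq (φ : C(X, ℝ) →ₚ[ℝ] ℝ) :
    ∃ ν : Measure X, IsFiniteMeasure ν ∧ ∀ f : C(X, ℝ), ∫ x, f x ∂ν = φ f := by
  let Λ : CompactlySupportedContinuousMap X ℝ →ₚ[ℝ] ℝ :=
    { toFun := fun f => φ f.toContinuousMap
      map_add' := fun f g => map_add φ f.toContinuousMap g.toContinuousMap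
      map_smul' := fun a f => map_smul φ a f.toContinuousMap
      monotone' := fun _ _ hfg => OrderHomClass.mono φ hfg }
  exact ⟨RealRMK.rieszMeasure Λ, inferInstance, fun f =>
    RealRMK.integral_rieszMeasure Λ (CompactlySupportedContinuousMap.continuousMapEquiv f)⟩

theorem exists_isProbabilityMeasure_integral_map [Nonempty X] (B : C(X, ℝ) →ₚ[ℝ] C(X, ℝ)) :
    ∃ ν : Measure X, IsProbabilityMeasure ν ∧
      ∀ f : C(X, ℝ), ∫ x, B f x ∂ν = collatzWielandtNumber B * ∫ x, f x ∂ν := by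
  obtain ⟨φ, hφ_one, hφ⟩ := exists_eigenfunctional B
  obtain ⟨ν, _, hνφ⟩ := exists_isFiniteMeasure_integral_eq φ
  refine ⟨ν, ?_, fun f => by rw [hνφ, hνφ, hφ]⟩
  have hν_univ := hνφ 1
  rw [hφ_one] at hν_univ
  exact isProbabilityMeasure_iff_real.mpr (by simpa using hν_univ)

end Eigenmeasure

section TransferOperator

variable [TopologicalSpace X] [TopologicalSpace Θ] [CompactSpace Θ] [MeasurableSpace Θ]
  [OpensMeasurableSpace Θ]

theorem continuous_integral_continuousMap (q : X → Measure Θ) [∀ x, IsFiniteMeasure (q x)]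
    (hq : ∀ g : C(Θ, ℝ), Continuous fun x => ∫ θ, g θ ∂(q x)) (G : C(X, C(Θ, ℝ))) :
    Continuous fun x => ∫ θ, G x θ ∂(q x) := by
  refine continuous_iff_continuousAt.mpr fun x₀ => ?_
  have hmass : Continuous fun x => (q x).real Set.univ := by simpa using hq 1
  have hbound (x : X) : ‖∫ θ, (G x - G x₀) θ ∂(q x)‖ ≤ ‖G x - G x₀‖ * (q x).real Set.univ :=
    norm_integral_le_of_norm_le_const (.of_forall (G x - G x₀).norm_coe_le_norm)
  have hbound_tendsto :
      Tendsto (fun x => ‖G x - G x₀‖ * (q x).real Set.univ) (𝓝 x₀) (𝓝 0) := by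
    have : Continuous fun x => ‖G x - G x₀‖ * (q x).real Set.univ := by fun_prop
    simpa using this.tendsto x₀
  have hsplit (x : X) :
      ∫ θ, (G x - G x₀) θ ∂(q x) + ∫ θ, G x₀ θ ∂(q x) = ∫ θ, G x θ ∂(q x) := by
    rw [← integral_add (integrable_continuousMap _ _) (integrable_continuousMap _ _)]
    simp
  have hlim := (squeeze_zero_norm hbound hbound_tendsto).add ((hq (G x₀)).tendsto x₀)
  simpa only [ContinuousAt, hsplit, zero_add] using hlim

/-- The transfer operator `B_q` of the IFSm `(X, τ, q)` as a positive operator on `C(X, ℝ)`; the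
weak-* continuity `hq` of `q` makes `B_q f` continuous. -/
noncomputable def transferOperator (τ : Θ → X → X) (hτ : Continuous fun p : Θ × X => τ p.1 p.2)
    (q : X → Measure Θ) [∀ x, IsFiniteMeasure (q x)]
    (hq : ∀ g : C(Θ, ℝ), Continuous fun x => ∫ θ, g θ ∂(q x)) : C(X, ℝ) →ₚ[ℝ] C(X, ℝ) :=
  let pullback (f : C(X, ℝ)) : C(X, C(Θ, ℝ)) :=
    ContinuousMap.curry ⟨fun p => f (τ p.2 p.1), f.continuous.comp (hτ.comp continuous_swap)⟩
  .mk₀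
    { toFun := fun f => ⟨fun x => ∫ θ, f (τ θ x) ∂(q x),
        continuous_integral_continuousMap q hq (pullback f)⟩
      map_add' := fun f g => ContinuousMap.ext fun x =>
        integral_add (integrable_continuousMap (q x) (pullback f x))
          (integrable_continuousMap (q x) (pullback g x))
      map_smul' := fun a f => ContinuousMap.ext fun x => integral_const_mul a fun θ => f (τ θ x) }
    fun _ hf _ => integral_nonneg fun _ => hf _

variable (τ : Θ → X → X) (hτ : Continuous fun p : Θ × X => τ p.1 p.2) (q : X → Measure Θ)
  [∀ x, IsFiniteMeasure (q x)] (hq : ∀ g : C(Θ, ℝ), Continuous fun x => ∫ θ, g θ ∂(q x))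

theorem transferOperator_apply (f : C(X, ℝ)) (x : X) :
    transferOperator τ hτ q hq f x = ∫ θ, f (τ θ x) ∂(q x) :=
  rfl

theorem transferOperator_one_pos {x : X} (hx : q x ≠ 0) : 0 < transferOperator τ hτ q hq 1 x := by
  have : NeZero (q x) := ⟨hx⟩
  simp [transferOperator_apply]

theorem transferOperator_iterate_apply (f : C(X, ℝ)) (N : ℕ) (x : X) :
    (transferOperator τ hτ q hq)^[N] f x = transferIter q τ N f x := by
  induction N generalizing x with
  | zero => rfl
  | succ N ih => simp only [Function.iterate_succ_apply', transferOperator_apply, ih, transferIter]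

end TransferOperator

theorem exists_eigenmeasure_markov_operator_general
    [TopologicalSpace X] [CompactSpace X] [T2Space X] [MeasurableSpace X] [BorelSpace X]
    [Nonempty X] [TopologicalSpace Θ] [CompactSpace Θ] [MeasurableSpace Θ]
    [OpensMeasurableSpace Θ] (τ : Θ → X → X) (hτ : Continuous fun p : Θ × X => τ p.1 p.2)
    (q : X → Measure Θ) [∀ x, IsFiniteMeasure (q x)] (hq : ∀ x, q x ≠ 0)
    (hqcont : ∀ g : C(Θ, ℝ), Continuous fun x => ∫ θ, g θ ∂(q x)) :
    ∃ ρ : ℝ, 0 < ρ ∧ ∃ ν : Measure X, IsProbabilityMeasure ν ∧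
      (∀ f : C(X, ℝ), ∫ x, (∫ θ, f (τ θ x) ∂(q x)) ∂ν = ρ * ∫ x, f x ∂ν) ∧
      ∀ N : ℕ, ρ ^ N ≤ ⨆ x : X, transferIter q τ N (fun _ => 1) x := by
  let B := transferOperator τ hτ q hqcont
  obtain ⟨ν, hν, heig⟩ := exists_isProbabilityMeasure_integral_map B
  set ρ := collatzWielandtNumber B
  have hsemi : Function.Semiconj (fun f : C(X, ℝ) => ∫ x, f x ∂ν) B (ρ * ·) := heig
  have hpow (N : ℕ) : ∫ x, B^[N] 1 x ∂ν = ρ ^ N := by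
    simpa [mul_left_iterate] using (hsemi.iterate_right N).eq 1
  have hρ : 0 < ρ := by
    obtain ⟨x, hx⟩ := exists_le_integral (integrable_continuousMap ν (B 1))
    have hBρ : B 1 x ≤ ρ := hx.trans_eq (by simpa using hpow 1)
    exact (transferOperator_one_pos τ hτ q hqcont (hq x)).trans_le hBρ
  refine ⟨ρ, hρ, ν, hν, heig, fun N => ?_⟩
  calc ρ ^ N = ∫ x, B^[N] 1 x ∂ν := (hpow N).symm
    _ ≤ ⨆ x, B^[N] 1 x := integral_continuousMap_le_iSup ν _
    _ = ⨆ x, transferIter q τ N (fun _ => 1) x :=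
      iSup_congr (transferOperator_iterate_apply τ hτ q hqcont 1 N)

/-- There are `ρ > 0` and a Borel probability measure `ν` on `X` which is an
eigenmeasure of the Markov operator `L_q` with eigenvalue `ρ`, i.e.
`∫ B_q(f) dν = ρ ∫ f dν` for all `f ∈ C(X,ℝ)`; moreover `ρ^N ≤ ‖B_q^N(1)‖_∞` for all `N ≥ 1`. -/
theorem exists_eigenmeasure_markov_operator
    [MetricSpace X] [CompactSpace X] [MeasurableSpace X] [BorelSpace X] [Nonempty X]
    [MetricSpace Θ] [CompactSpace Θ] [MeasurableSpace Θ] [BorelSpace Θ] [Nonempty Θ]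
    (τ : Θ → X → X) (hτ : Continuous fun p : Θ × X => τ p.1 p.2)
    (q : X → Measure Θ)
    (hqfin : ∃ C : ENNReal, C < ⊤ ∧ ∀ x, q x Set.univ ≤ C)
    (hqpos : ∃ c : ENNReal, 0 < c ∧ ∀ x, c ≤ q x Set.univ)
    (hqmeas : ∀ A : Set Θ, MeasurableSet A → Measurable fun x => q x A)
    (hqcont : ∀ g : C(Θ, ℝ), Continuous fun x => ∫ θ, g θ ∂(q x)) :
    ∃ ρ : ℝ, 0 < ρ ∧ ∃ ν : Measure X, IsProbabilityMeasure ν ∧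
      (∀ f : C(X, ℝ), ∫ x, (∫ θ, f (τ θ x) ∂(q x)) ∂ν = ρ * ∫ x, f x ∂ν) ∧
      ∀ N : ℕ, 1 ≤ N → ρ ^ N ≤ ⨆ x : X, transferIter q τ N (fun _ => 1) x := by
  obtain ⟨C, hC, hqC⟩ := hqfin
  obtain ⟨c, hc, hqc⟩ := hqpos
  have (x : X) : IsFiniteMeasure (q x) := ⟨(hqC x).trans_lt hC⟩
  have hq (x : X) : q x ≠ 0 := Measure.measure_univ_pos.mp (hc.trans_le (hqc x))
  obtain ⟨ρ, hρ, ν, hν, heig, hpow⟩ :=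
    exists_eigenmeasure_markov_operator_general τ hτ q hq hqcont
  exact ⟨ρ, hρ, ν, hν, heig, fun N _ => hpow N⟩
end

section
/- Assume X and Θ are nonempty. The set H(τ) of holonomic Borel probability measures on X × Θ is nonempty, convex, and compact in the weak-* topology. -/
open MeasureTheory Filter Topology

variable {X Θ : Type*}

/-- A Borel probability measure on `X × Θ` is holonomic (w.r.t. `τ`) if
`∫ (f(τ_θ(x)) − f(x)) dν̂(x,θ) = 0` for every `f ∈ C(X,ℝ)`. -/
def Holonomic [MeasurableSpace X] [MeasurableSpace Θ] [TopologicalSpace X]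
    (τ : Θ → X → X) (μhat : Measure (X × Θ)) : Prop :=
  ∀ f : C(X, ℝ), ∫ p : X × Θ, (f (τ p.2 p.1) - f p.1) ∂μhat = 0

/-!
If a measure on `X × Θ` is invariant under the skew map `(x, θ) ↦ (τ_θ x, θ)`, testing invariance
on functions of `x` alone shows that it is holonomic, so existence is the Krylov–Bogolyubov
argument: the empirical measures along an orbit have a cluster point in the compact space of
probability measures, and it is invariant because the Birkhoff averages of `g ∘ T` and of `g`
differ by `O(1/n)`. Being holonomic is a family of linear equations in the measure which are
continuous for weak convergence; hence compactness and convexity.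
-/

open scoped ENNReal

section BirkhoffAverage

variable {Ω M : Type*}

theorem birkhoffAverage_comp_self (R : Type*) [DivisionSemiring R] [AddCommMonoid M] [Module R M]
    (T : Ω → Ω) (g : Ω → M) (n : ℕ) (x : Ω) :
    birkhoffAverage R T (g ∘ T) n x = birkhoffAverage R T g n (T x) := by
  simp only [birkhoffAverage, birkhoffSum, Function.comp_apply, ← Function.iterate_succ_apply,
    ← Function.iterate_succ_apply']

end BirkhoffAverage

section EmpiricalMeasure

variable {Ω : Type*} [MeasurableSpace Ω]

/-- The empirical measure `n⁻¹ ∑_{k < n} δ_{T^k x}` of the first `n` points of the orbit of `x`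
under `T`. It is the zero measure when `n = 0`. -/
noncomputable def empiricalMeasure (T : Ω → Ω) (n : ℕ) (x : Ω) : Measure Ω :=
  (n : ℝ≥0∞)⁻¹ • birkhoffSum T Measure.dirac n x

instance isProbabilityMeasure_empiricalMeasure (T : Ω → Ω) (n : ℕ) [NeZero n] (x : Ω) :
    IsProbabilityMeasure (empiricalMeasure T n x) where
  measure_univ := by
    simpa [empiricalMeasure, birkhoffSum] using
      ENNReal.inv_mul_cancel (Nat.cast_ne_zero.2 (NeZero.ne n)) (ENNReal.natCast_ne_top n)

theorem integral_empiricalMeasure {E : Type*} [NormedAddCommGroup E] [NormedSpace ℝ E]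
    [CompleteSpace E] (T : Ω → Ω) (n : ℕ) (x : Ω) {g : Ω → E} (hg : StronglyMeasurable g) :
    ∫ ω, g ω ∂empiricalMeasure T n x = birkhoffAverage ℝ T g n x := by
  rw [empiricalMeasure, integral_smul_measure, birkhoffSum,
    integral_finsetSum_measure fun _ _ => integrable_dirac' hg enorm_lt_top]
  simp only [integral_dirac' g _ hg, ENNReal.toReal_inv, ENNReal.toReal_natCast, birkhoffAverage,
    birkhoffSum]

end EmpiricalMeasure

section ContinuousComp

variable {Y Ω : Type*} [TopologicalSpace Y] [CompactSpace Y]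
  [TopologicalSpace Ω] [MeasurableSpace Ω] [OpensMeasurableSpace Ω] {h : Ω → Y}

theorem integrable_continuousMap_comp {E : Type*} [NormedAddCommGroup E]
    [SecondCountableTopology E] (f : C(Y, E)) (hh : Continuous h)
    (μ : Measure Ω) [IsFiniteMeasure μ] : Integrable (fun ω => f (h ω)) μ := by
  borelize E
  exact ((BoundedContinuousFunction.mkOfCompact f).compContinuous ⟨h, hh⟩).integrable μ

theorem continuous_integral_continuousMap_comp (f : C(Y, ℝ)) (hh : Continuous h) :
    Continuous fun μ : ProbabilityMeasure Ω => ∫ ω, f (h ω) ∂(μ : Measure Ω) :=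
  ProbabilityMeasure.continuous_integral_boundedContinuousFunction
    ((BoundedContinuousFunction.mkOfCompact f).compContinuous ⟨h, hh⟩)

end ContinuousComp

section KrylovBogolyubov

variable {Ω : Type*} [TopologicalSpace Ω] [CompactSpace Ω] [MeasurableSpace Ω]

theorem tendsto_integral_comp_sub_integral_empiricalMeasure [OpensMeasurableSpace Ω]
    {T : Ω → Ω} (hT : Continuous T) (g : C(Ω, ℝ)) (x : Ω) :
    Tendsto (fun n => ∫ ω, g (T ω) ∂empiricalMeasure T n x - ∫ ω, g ω ∂empiricalMeasure T n x)
      atTop (𝓝 0) := by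
  have integral_comp (n : ℕ) :
      ∫ ω, g (T ω) ∂empiricalMeasure T n x = birkhoffAverage ℝ T g n (T x) :=
    (integral_empiricalMeasure T n x (g.continuous.comp hT).stronglyMeasurable).trans
      (birkhoffAverage_comp_self ℝ T g n x)
  simp only [integral_comp, integral_empiricalMeasure T _ x g.continuous.stronglyMeasurable]
  exact tendsto_birkhoffAverage_apply_sub_birkhoffAverage' ℝ
    (isCompact_range g.continuous).isBounded T x

/-- The Krylov–Bogolyubov theorem. Invariance is tested on continuous functions only, since Borel
measures on a non-metrizable compact space need not be determined by their integrals. -/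
theorem exists_probabilityMeasure_forall_integral_comp_eq [T2Space Ω] [BorelSpace Ω] [Nonempty Ω]
    {T : Ω → Ω} (hT : Continuous T) :
    ∃ μ : ProbabilityMeasure Ω, ∀ g : C(Ω, ℝ),
      ∫ ω, g (T ω) ∂(μ : Measure Ω) = ∫ ω, g ω ∂(μ : Measure Ω) := by
  obtain ⟨x⟩ := ‹Nonempty Ω›
  let ν (n : ℕ) : ProbabilityMeasure Ω := ⟨empiricalMeasure T (n + 1) x, inferInstance⟩
  obtain ⟨μ, hμ⟩ : ∃ μ, MapClusterPt μ atTop ν := exists_clusterPt_of_compactSpace _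
  obtain ⟨U, hU, hνμ⟩ := mapClusterPt_iff_ultrafilter.1 hμ
  refine ⟨μ, fun g => sub_eq_zero.1 ?_⟩
  have continuous_defect : Continuous fun κ : ProbabilityMeasure Ω =>
      ∫ ω, g (T ω) ∂(κ : Measure Ω) - ∫ ω, g ω ∂(κ : Measure Ω) :=
    (continuous_integral_continuousMap_comp g hT).sub
      (continuous_integral_continuousMap_comp g continuous_id)
  have defect_tendsto_zero :=
    (tendsto_integral_comp_sub_integral_empiricalMeasure hT g x).comp (tendsto_add_atTop_nat 1)
  exact tendsto_nhds_unique ((continuous_defect.tendsto μ).comp hνμ)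
    (defect_tendsto_zero.mono_left hU)

end KrylovBogolyubov

namespace Holonomic

variable [TopologicalSpace X] [MeasurableSpace X] [MeasurableSpace Θ] {τ : Θ → X → X}

protected theorem smul {μ : Measure (X × Θ)} (hμ : Holonomic τ μ) (c : ℝ≥0∞) :
    Holonomic τ (c • μ) := fun f => by
  rw [integral_smul_measure, hμ f, smul_zero]

variable [CompactSpace X] [TopologicalSpace Θ] [OpensMeasurableSpace (X × Θ)]

theorem iff_forall_integral_eq (hτ : Continuous fun p : Θ × X => τ p.1 p.2)
    {μ : Measure (X × Θ)} [IsFiniteMeasure μ] :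
    Holonomic τ μ ↔ ∀ f : C(X, ℝ), ∫ p, f (τ p.2 p.1) ∂μ = ∫ p, f p.1 ∂μ := by
  have continuous_swapped : Continuous fun p : X × Θ => τ p.2 p.1 := hτ.comp continuous_swap
  refine forall_congr' fun f => ?_
  rw [integral_sub (integrable_continuousMap_comp f continuous_swapped μ)
    (integrable_continuousMap_comp f continuous_fst μ), sub_eq_zero]

protected theorem add (hτ : Continuous fun p : Θ × X => τ p.1 p.2) {μ κ : Measure (X × Θ)}
    [IsFiniteMeasure μ] [IsFiniteMeasure κ] (hμ : Holonomic τ μ) (hκ : Holonomic τ κ) :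
    Holonomic τ (μ + κ) := fun f => by
  have integrable_defect (ρ : Measure (X × Θ)) [IsFiniteMeasure ρ] :
      Integrable (fun p => f (τ p.2 p.1) - f p.1) ρ :=
    (integrable_continuousMap_comp f (hτ.comp continuous_swap) ρ).sub
      (integrable_continuousMap_comp f continuous_fst ρ)
  rw [integral_add_measure (integrable_defect μ) (integrable_defect κ), hμ f, hκ f, add_zero]

theorem smul_add_smul (hτ : Continuous fun p : Θ × X => τ p.1 p.2) {μ κ : Measure (X × Θ)}
    [IsFiniteMeasure μ] [IsFiniteMeasure κ] (hμ : Holonomic τ μ) (hκ : Holonomic τ κ)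
    {a b : ℝ≥0∞} (ha : a ≠ ∞) (hb : b ≠ ∞) : Holonomic τ (a • μ + b • κ) :=
  have := μ.smul_finite ha
  have := κ.smul_finite hb
  (hμ.smul a).add hτ (hκ.smul b)

theorem isClosed_setOfPred (hτ : Continuous fun p : Θ × X => τ p.1 p.2) :
    IsClosed {μ : ProbabilityMeasure (X × Θ) | Holonomic τ (μ : Measure (X × Θ))} := by
  simp only [iff_forall_integral_eq hτ, Set.ofPred_forall]
  exact isClosed_iInter fun f =>
    isClosed_eq (continuous_integral_continuousMap_comp f (hτ.comp continuous_swap))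
      (continuous_integral_continuousMap_comp f continuous_fst)

end Holonomic

theorem exists_probabilityMeasure_holonomic
    [TopologicalSpace X] [CompactSpace X] [T2Space X] [MeasurableSpace X] [Nonempty X]
    [TopologicalSpace Θ] [CompactSpace Θ] [T2Space Θ] [MeasurableSpace Θ] [Nonempty Θ]
    [BorelSpace (X × Θ)] {τ : Θ → X → X} (hτ : Continuous fun p : Θ × X => τ p.1 p.2) :
    ∃ μ : ProbabilityMeasure (X × Θ), Holonomic τ (μ : Measure (X × Θ)) := by
  have continuous_skewMap : Continuous fun p : X × Θ => (τ p.2 p.1, p.2) :=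
    (hτ.comp continuous_swap).prodMk continuous_snd
  obtain ⟨μ, hμ⟩ := exists_probabilityMeasure_forall_integral_comp_eq continuous_skewMap
  exact ⟨μ, (Holonomic.iff_forall_integral_eq hτ).2 fun f => hμ (f.comp .fst)⟩

theorem holonomic_nonempty_compact_convex_general
    [TopologicalSpace X] [CompactSpace X] [T2Space X] [MeasurableSpace X] [Nonempty X]
    [TopologicalSpace Θ] [CompactSpace Θ] [T2Space Θ] [MeasurableSpace Θ] [Nonempty Θ]
    [BorelSpace (X × Θ)] (τ : Θ → X → X) (hτ : Continuous fun p : Θ × X => τ p.1 p.2) :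
    {μ : ProbabilityMeasure (X × Θ) | Holonomic τ (μ : Measure (X × Θ))}.Nonempty ∧
    IsCompact {μ : ProbabilityMeasure (X × Θ) | Holonomic τ (μ : Measure (X × Θ))} ∧
    (∀ μ κ : ProbabilityMeasure (X × Θ),
      Holonomic τ (μ : Measure (X × Θ)) → Holonomic τ (κ : Measure (X × Θ)) →
      ∀ a b : ENNReal, a + b = 1 →
        ∃ σ : ProbabilityMeasure (X × Θ), Holonomic τ (σ : Measure (X × Θ)) ∧
          (σ : Measure (X × Θ)) =
            a • (μ : Measure (X × Θ)) + b • (κ : Measure (X × Θ))) := by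
  refine ⟨exists_probabilityMeasure_holonomic hτ, (Holonomic.isClosed_setOfPred hτ).isCompact,
    fun μ κ hμ hκ a b hab => ?_⟩
  obtain ⟨ha, hb⟩ : a ≠ ∞ ∧ b ≠ ∞ := ENNReal.add_ne_top.1 (hab ▸ ENNReal.one_ne_top)
  exact ⟨⟨a • (μ : Measure (X × Θ)) + b • (κ : Measure (X × Θ)), ⟨by simp [hab]⟩⟩,
    hμ.smul_add_smul hτ hκ ha hb, rfl⟩

/-- The set of holonomic Borel probability measures on `X × Θ` is nonempty,
compact in the weak-* topology, and convex. -/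
theorem holonomic_nonempty_compact_convex
    [MetricSpace X] [CompactSpace X] [MeasurableSpace X] [BorelSpace X] [Nonempty X]
    [MetricSpace Θ] [CompactSpace Θ] [MeasurableSpace Θ] [BorelSpace Θ] [Nonempty Θ]
    (τ : Θ → X → X) (hτ : Continuous fun p : Θ × X => τ p.1 p.2) :
    {μ : ProbabilityMeasure (X × Θ) | Holonomic τ (μ : Measure (X × Θ))}.Nonempty ∧
    IsCompact {μ : ProbabilityMeasure (X × Θ) | Holonomic τ (μ : Measure (X × Θ))} ∧
    (∀ μ κ : ProbabilityMeasure (X × Θ),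
      Holonomic τ (μ : Measure (X × Θ)) → Holonomic τ (κ : Measure (X × Θ)) →
      ∀ a b : ENNReal, a + b = 1 →
        ∃ σ : ProbabilityMeasure (X × Θ), Holonomic τ (σ : Measure (X × Θ)) ∧
          (σ : Measure (X × Θ)) =
            a • (μ : Measure (X × Θ)) + b • (κ : Measure (X × Θ))) :=
  holonomic_nonempty_compact_convex_general τ hτ
end

section
/- Let ν̂ be a holonomic Borel probability measure on X × Θ with X-marginal ν, let μ be a Borel probability measure on Θ, and suppose ν̂ disintegrates with densities with respect to μ: there is a measurable J : X × Θ → [0,∞), with J > 0 (dμ(θ)dν(x))-almost everywhere and (x,θ) ↦ J(x,θ)·log J(x,θ) integrable with respect to dμ(θ)dν(x), such that ∫_{X×Θ} g dν̂ = ∫_X ∫_Θ g(x,θ)·J(x,θ) dμ(θ) dν(x) for every bounded measurable g. Define the average entropy h_a(ν̂) = −∫_X ∫_Θ log(J(x,θ))·J(x,θ) dμ(θ) dν(x) and the variational entropy h_v(ν̂) = inf { ∫_X log(B_μ(g)/g) dν : g ∈ C(X,ℝ), g > 0 }, where B_μ(g)(x) = ∫_Θ g(τ_θ(x)) dμ(θ).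 Then h_a(ν̂) ≤ h_v(ν̂) ≤ 0. -/
open MeasureTheory Filter Topology

variable {X Θ : Type*}

/-- The variational entropy `h_v(ν) = inf { ∫ log(B_μ(g)/g) dν : g ∈ C(X,ℝ), g > 0 }`,
where `B_μ(g)(x) = ∫_Θ g(τ_θ(x)) dμ(θ)`. -/
noncomputable def varEntropy [MeasurableSpace X] [MeasurableSpace Θ]
    [TopologicalSpace X] [TopologicalSpace Θ]
    (τ : Θ → X → X) (μ : Measure Θ) (ν : Measure X) : ℝ :=
  sInf {r : ℝ | ∃ g : C(X, ℝ), (∀ x, 0 < g x) ∧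
    r = ∫ x, Real.log ((∫ θ, g (τ θ x) ∂μ) / g x) ∂ν}

/-!
Write a positive `g` as `exp f`. Normalising `g ∘ τ` along each fibre `{x} × Θ` gives a density
`exp (f (τ_θ x) - log (B_μ g x))` with respect to `μ`. Gibbs' inequality against `J`, which is the
integral of the Fenchel–Young inequality `u j - j log j ≤ exp u - j`, bounds
`∫ f ∘ τ dν̂ - ∫ log (B_μ g) dν` by `-h_a(ν̂)`: a fibrewise Donsker–Varadhan inequality. Holonomy
replaces `∫ f ∘ τ dν̂` by `∫ log g dν`, so `h_a(ν̂) ≤ ∫ log (B_μ g / g) dν`, and `g = 1` makes the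
right-hand side vanish.
-/

section Entropy

theorem mul_sub_mul_log_le_exp_sub {j : ℝ} (hj : 0 ≤ j) (u : ℝ) :
    u * j - j * Real.log j ≤ Real.exp u - j := by
  rcases hj.eq_or_lt with rfl | hj
  · simpa using (Real.exp_pos u).le
  · have tangent : (u - Real.log j + 1) * j ≤ Real.exp (u - Real.log j) * j := by
      gcongr
      exact Real.add_one_le_exp _
    rw [Real.exp_sub, Real.exp_log hj, div_mul_cancel₀ _ hj.ne'] at tangent
    linarith

theorem abs_le_exp_one_add_abs_mul_log (j : ℝ) :
    |j| ≤ Real.exp 1 + |j * Real.log j| := by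
  rcases le_total |j| (Real.exp 1) with hj | hj
  · exact le_add_of_le_of_nonneg hj (abs_nonneg _)
  · have one_le_log : 1 ≤ Real.log |j| :=
      (Real.le_log_iff_exp_le ((Real.exp_pos 1).trans_le hj)).2 hj
    calc |j| ≤ |j| * |Real.log j| :=
          le_mul_of_one_le_right (abs_nonneg j) (Real.log_abs j ▸ one_le_log.trans (le_abs_self _))
      _ = |j * Real.log j| := (abs_mul _ _).symm
      _ ≤ Real.exp 1 + |j * Real.log j| := le_add_of_nonneg_left (Real.exp_pos 1).le

variable {Ω : Type*} [MeasurableSpace Ω] {π : Measure Ω} {j u : Ω → ℝ}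

theorem integrable_of_integrable_mul_log [IsFiniteMeasure π] (hj : AEStronglyMeasurable j π)
    (hjlog : Integrable (fun ω => j ω * Real.log (j ω)) π) : Integrable j π :=
  ((integrable_const (Real.exp 1)).add hjlog.abs).mono' hj
    (.of_forall fun ω => abs_le_exp_one_add_abs_mul_log (j ω))

theorem integral_mul_le_integral_mul_log (hj_nonneg : 0 ≤ᵐ[π] j) (hj : Integrable j π)
    (hjlog : Integrable (fun ω => j ω * Real.log (j ω)) π)
    (huj : Integrable (fun ω => u ω * j ω) π) (hu : Integrable (fun ω => Real.exp (u ω)) π)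
    (hmass : ∫ ω, Real.exp (u ω) ∂π ≤ ∫ ω, j ω ∂π) :
    ∫ ω, u ω * j ω ∂π ≤ ∫ ω, j ω * Real.log (j ω) ∂π := by
  have pointwise := integral_mono_ae (huj.sub hjlog) (hu.sub hj)
    (hj_nonneg.mono fun ω hω => mul_sub_mul_log_le_exp_sub hω (u ω))
  rw [integral_sub' huj hjlog, integral_sub' hu hj] at pointwise
  linarith

end Entropy

section LogIntegralExp

variable {Ω : Type*} [MeasurableSpace Ω] {P : Measure Ω} {h : Ω → ℝ} {K : ℝ}

theorem integrable_exp_of_abs_le [IsFiniteMeasure P] (hh : AEMeasurable h P)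
    (hK : ∀ᵐ ω ∂P, |h ω| ≤ K) : Integrable (fun ω => Real.exp (h ω)) P := by
  simpa only [one_mul] using ProbabilityTheory.integrable_exp_mul_of_mem_Icc (t := 1) hh
    (hK.mono fun _ hω => abs_le.1 hω)

theorem abs_log_integral_exp_le [IsProbabilityMeasure P] (hh : AEMeasurable h P)
    (hK : ∀ᵐ ω ∂P, |h ω| ≤ K) : |Real.log (∫ ω, Real.exp (h ω) ∂P)| ≤ K := by
  have hexp := integrable_exp_of_abs_le hh hK
  have lower : Real.exp (-K) ≤ ∫ ω, Real.exp (h ω) ∂P := by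
    simpa using integral_mono_ae (integrable_const _) hexp
      (hK.mono fun _ hω => Real.exp_le_exp.2 (abs_le.1 hω).1)
  have upper : ∫ ω, Real.exp (h ω) ∂P ≤ Real.exp K := by
    simpa using integral_mono_ae hexp (integrable_const _)
      (hK.mono fun _ hω => Real.exp_le_exp.2 (abs_le.1 hω).2)
  have hpos := integral_exp_pos hexp
  exact abs_le.2 ⟨(Real.le_log_iff_exp_le hpos).2 lower, (Real.log_le_iff_le_exp hpos).2 upper⟩

theorem integral_exp_sub_log_integral_exp [NeZero P]
    (hexp : Integrable (fun ω => Real.exp (h ω)) P) :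
    ∫ ω, Real.exp (h ω - Real.log (∫ ω', Real.exp (h ω') ∂P)) ∂P = 1 := by
  have hpos := integral_exp_pos hexp
  simp only [Real.exp_sub, Real.exp_log hpos, integral_div]
  exact div_self hpos.ne'

end LogIntegralExp

section Disintegration

variable [MeasurableSpace X] [MeasurableSpace Θ]

/-- `νhat` disintegrates over its `X`-marginal with density `J` with respect to the a-priori
measure `μ`, that is `dν̂(x,θ) = J(x,θ) dμ(θ) dν(x)`, expressed through bounded test functions. -/
def DisintegratesWithDensity (νhat : Measure (X × Θ)) (μ : Measure Θ) (J : X × Θ → ℝ) : Prop :=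
  ∀ g : X × Θ → ℝ, Measurable g → (∃ C : ℝ, ∀ p, |g p| ≤ C) →
    ∫ p, g p ∂νhat = ∫ x, ∫ θ, g (x, θ) * J (x, θ) ∂μ ∂νhat.fst

/-- The average entropy `h_a(ν̂) = −∫∫ J log J dμ dν`, where `J` is the density with which `νhat`
disintegrates over its `X`-marginal `ν`. Since `Real.log 0 = 0`, the convention `0 log 0 = 0` is
built in. -/
noncomputable def averageEntropy (νhat : Measure (X × Θ)) (μ : Measure Θ) (J : X × Θ → ℝ) : ℝ :=
  -∫ x, ∫ θ, Real.log (J (x, θ)) * J (x, θ) ∂μ ∂νhat.fst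

variable {νhat : Measure (X × Θ)} {μ : Measure Θ} {J h : X × Θ → ℝ} {K : ℝ}

theorem averageEntropy_eq_neg_integral_mul_log [SFinite νhat] [SFinite μ]
    (hJlog : Integrable (fun p => J p * Real.log (J p)) (νhat.fst.prod μ)) :
    averageEntropy νhat μ J = -∫ p, J p * Real.log (J p) ∂νhat.fst.prod μ := by
  simp only [averageEntropy, integral_prod _ hJlog, mul_comm]

theorem DisintegratesWithDensity.integral_eq [SFinite νhat] [SFinite μ]
    (hdis : DisintegratesWithDensity νhat μ J) (hJ : Integrable J (νhat.fst.prod μ))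
    (hh : Measurable h) (hK : ∀ p, |h p| ≤ K) :
    ∫ p, h p ∂νhat = ∫ p, h p * J p ∂νhat.fst.prod μ := by
  rw [hdis h hh ⟨K, hK⟩,
    integral_prod _ (hJ.bdd_mul hh.aestronglyMeasurable (.of_forall hK))]

theorem DisintegratesWithDensity.integral_density [IsFiniteMeasure νhat] [SFinite μ]
    (hdis : DisintegratesWithDensity νhat μ J) (hJ : Integrable J (νhat.fst.prod μ)) :
    ∫ p, J p ∂νhat.fst.prod μ = νhat.real Set.univ := by
  simpa using (hdis.integral_eq hJ (h := fun _ => 1) measurable_const (fun _ => abs_one.le)).symm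

theorem measurable_log_integral_exp [SFinite μ] (hh : Measurable h) :
    Measurable fun x => Real.log (∫ θ, Real.exp (h (x, θ)) ∂μ) :=
  hh.exp.stronglyMeasurable.integral_prod_right.measurable.log

theorem integral_le_integral_log_integral_exp_sub_averageEntropy [IsFiniteMeasure νhat]
    [IsProbabilityMeasure μ] (hdis : DisintegratesWithDensity νhat μ J)
    (hJmeas : AEStronglyMeasurable J (νhat.fst.prod μ)) (hJ_nonneg : 0 ≤ᵐ[νhat.fst.prod μ] J)
    (hJlog : Integrable (fun p => J p * Real.log (J p)) (νhat.fst.prod μ))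
    (hh : Measurable h) (hK : ∀ p, |h p| ≤ K) :
    ∫ p, h p ∂νhat ≤
      ∫ x, Real.log (∫ θ, Real.exp (h (x, θ)) ∂μ) ∂νhat.fst - averageEntropy νhat μ J := by
  set c : X → ℝ := fun x => Real.log (∫ θ, Real.exp (h (x, θ)) ∂μ)
  set u : X × Θ → ℝ := fun p => h p - c p.1
  have hJ := integrable_of_integrable_mul_log hJmeas hJlog
  have hc : Measurable c := measurable_log_integral_exp hh
  have fibre_meas (x : X) : AEMeasurable (fun θ => h (x, θ)) μ :=
    (hh.comp measurable_prodMk_left).aemeasurable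
  have fibre_bound (x : X) : ∀ᵐ θ ∂μ, |h (x, θ)| ≤ K := .of_forall fun θ => hK (x, θ)
  have hcK (x : X) : |c x| ≤ K := abs_log_integral_exp_le (fibre_meas x) (fibre_bound x)
  have hu : Measurable u := hh.sub (hc.comp measurable_fst)
  have huK (p : X × Θ) : |u p| ≤ K + K := (abs_sub _ _).trans (add_le_add (hK p) (hcK p.1))
  have hexp : Integrable (fun p => Real.exp (u p)) (νhat.fst.prod μ) :=
    integrable_exp_of_abs_le hu.aemeasurable (.of_forall huK)
  have mass_exp : ∫ p, Real.exp (u p) ∂νhat.fst.prod μ = ∫ p, J p ∂νhat.fst.prod μ := by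
    have fibre (x : X) : ∫ θ, Real.exp (u (x, θ)) ∂μ = 1 :=
      integral_exp_sub_log_integral_exp (integrable_exp_of_abs_le (fibre_meas x) (fibre_bound x))
    rw [hdis.integral_density hJ, integral_prod _ hexp]
    simp only [fibre, integral_const, smul_eq_mul, mul_one, Measure.real, Measure.fst_univ]
  have integral_u : ∫ p, u p ∂νhat = ∫ p, h p ∂νhat - ∫ x, c x ∂νhat.fst := by
    rw [Measure.fst, integral_map measurable_fst.aemeasurable hc.aestronglyMeasurable]
    exact integral_sub (.of_bound hh.aestronglyMeasurable K (.of_forall hK))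
      (.of_bound (hc.comp measurable_fst).aestronglyMeasurable K (.of_forall fun p => hcK p.1))
  have gibbs := integral_mul_le_integral_mul_log hJ_nonneg hJ hJlog
    (hJ.bdd_mul hu.aestronglyMeasurable (.of_forall huK)) hexp mass_exp.le
  rw [← hdis.integral_eq hJ hu huK, integral_u] at gibbs
  rw [averageEntropy_eq_neg_integral_mul_log hJlog]
  linarith

end Disintegration

section Holonomic

variable [TopologicalSpace X] [CompactSpace X] [MeasurableSpace X] [OpensMeasurableSpace X]
  [MeasurableSpace Θ] {τ : Θ → X → X} {νhat : Measure (X × Θ)} {μ : Measure Θ} {J : X × Θ → ℝ}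

theorem integrable_continuousMap_comp_s9 {Ω : Type*} [MeasurableSpace Ω] {P : Measure Ω}
    [IsFiniteMeasure P] (f : C(X, ℝ)) {φ : Ω → X} (hφ : AEMeasurable φ P) :
    Integrable (fun ω => f (φ ω)) P :=
  .of_bound (f.continuous.measurable.comp_aemeasurable hφ).aestronglyMeasurable ‖f‖
    (.of_forall fun ω => f.norm_coe_le_norm (φ ω))

theorem Holonomic.integral_comp_eq [IsFiniteMeasure νhat] (hhol : Holonomic τ νhat)
    (hτ : Measurable fun p : Θ × X => τ p.1 p.2) (f : C(X, ℝ)) :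
    ∫ p, f (τ p.2 p.1) ∂νhat = ∫ x, f x ∂νhat.fst := by
  have hfτ : Integrable (fun p => f (τ p.2 p.1)) νhat :=
    integrable_continuousMap_comp_s9 f (hτ.comp measurable_swap).aemeasurable
  have hffst : Integrable (fun p => f p.1) νhat :=
    integrable_continuousMap_comp_s9 f measurable_fst.aemeasurable
  calc ∫ p, f (τ p.2 p.1) ∂νhat = ∫ p, f p.1 ∂νhat :=
        sub_eq_zero.1 (integral_sub hfτ hffst ▸ hhol f)
    _ = ∫ x, f x ∂νhat.fst := (integral_map measurable_fst.aemeasurable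
        f.continuous.measurable.aestronglyMeasurable).symm

theorem averageEntropy_le_integral_log_div [IsFiniteMeasure νhat] [IsProbabilityMeasure μ]
    (hτ : Measurable fun p : Θ × X => τ p.1 p.2) (hhol : Holonomic τ νhat)
    (hJmeas : AEStronglyMeasurable J (νhat.fst.prod μ)) (hJ_nonneg : 0 ≤ᵐ[νhat.fst.prod μ] J)
    (hJlog : Integrable (fun p => J p * Real.log (J p)) (νhat.fst.prod μ))
    (hdis : DisintegratesWithDensity νhat μ J) (g : C(X, ℝ)) (hg : ∀ x, 0 < g x) :
    averageEntropy νhat μ J ≤ ∫ x, Real.log ((∫ θ, g (τ θ x) ∂μ) / g x) ∂νhat.fst := by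
  obtain ⟨f, hf⟩ : ∃ f : C(X, ℝ), ∀ x, Real.exp (f x) = g x :=
    ⟨⟨fun x => Real.log (g x), g.continuous.log fun x => (hg x).ne'⟩, fun x => Real.exp_log (hg x)⟩
  simp only [← hf]
  have hfτ : Measurable fun p : X × Θ => f (τ p.2 p.1) :=
    f.continuous.measurable.comp (hτ.comp measurable_swap)
  have hfτK (p : X × Θ) : |f (τ p.2 p.1)| ≤ ‖f‖ := f.norm_coe_le_norm _
  have fibre_meas (x : X) : AEMeasurable (fun θ => f (τ θ x)) μ :=
    (hfτ.comp measurable_prodMk_left).aemeasurable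
  have fibre_bound (x : X) : ∀ᵐ θ ∂μ, |f (τ θ x)| ≤ ‖f‖ := .of_forall fun θ => hfτK (x, θ)
  have log_div (x : X) : Real.log ((∫ θ, Real.exp (f (τ θ x)) ∂μ) / Real.exp (f x)) =
      Real.log (∫ θ, Real.exp (f (τ θ x)) ∂μ) - f x := by
    rw [Real.log_div (integral_exp_pos (integrable_exp_of_abs_le (fibre_meas x)
      (fibre_bound x))).ne' (Real.exp_pos _).ne', Real.log_exp]
  have hlog : Integrable (fun x => Real.log (∫ θ, Real.exp (f (τ θ x)) ∂μ)) νhat.fst :=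
    .of_bound (measurable_log_integral_exp hfτ).aestronglyMeasurable ‖f‖
      (.of_forall fun x => abs_log_integral_exp_le (fibre_meas x) (fibre_bound x))
  have hfint : Integrable f νhat.fst := integrable_continuousMap_comp_s9 f aemeasurable_id
  have donsker_varadhan := integral_le_integral_log_integral_exp_sub_averageEntropy hdis hJmeas
    hJ_nonneg hJlog hfτ hfτK
  rw [hhol.integral_comp_eq hτ f] at donsker_varadhan
  simp only [log_div, integral_sub hlog hfint]
  linarith

theorem average_entropy_le_var_entropy_le_zero_general [TopologicalSpace Θ]
    [IsFiniteMeasure νhat] [IsProbabilityMeasure μ]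
    (hτ : Measurable fun p : Θ × X => τ p.1 p.2) (hhol : Holonomic τ νhat)
    (hJmeas : AEStronglyMeasurable J (νhat.fst.prod μ)) (hJ_nonneg : 0 ≤ᵐ[νhat.fst.prod μ] J)
    (hJlog : Integrable (fun p => J p * Real.log (J p)) (νhat.fst.prod μ))
    (hdis : DisintegratesWithDensity νhat μ J) :
    averageEntropy νhat μ J ≤ varEntropy τ μ νhat.fst ∧ varEntropy τ μ νhat.fst ≤ 0 := by
  set S : Set ℝ := {r | ∃ g : C(X, ℝ), (∀ x, 0 < g x) ∧
    r = ∫ x, Real.log ((∫ θ, g (τ θ x) ∂μ) / g x) ∂νhat.fst}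
  have lower : averageEntropy νhat μ J ∈ lowerBounds S := by
    rintro _ ⟨g, hg, rfl⟩
    exact averageEntropy_le_integral_log_div hτ hhol hJmeas hJ_nonneg hJlog hdis g hg
  have zero_mem : (0 : ℝ) ∈ S := ⟨1, by simp, by simp⟩
  exact ⟨le_csInf ⟨0, zero_mem⟩ lower, csInf_le ⟨_, lower⟩ zero_mem⟩

end Holonomic

/-- for a holonomic `ν̂` disintegrating with densities `J` w.r.t. the a-priori
probability `μ`, the average entropy is at most the variational entropy, which is `≤ 0`. -/
theorem average_entropy_le_var_entropy_le_zero
    [MetricSpace X] [CompactSpace X] [MeasurableSpace X] [BorelSpace X]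
    [MetricSpace Θ] [CompactSpace Θ] [MeasurableSpace Θ] [BorelSpace Θ]
    (τ : Θ → X → X) (hτ : Continuous fun p : Θ × X => τ p.1 p.2)
    (νhat : Measure (X × Θ)) [IsProbabilityMeasure νhat]
    (hhol : Holonomic τ νhat)
    (ν : Measure X) (hν : ν = νhat.map Prod.fst)
    (μ : Measure Θ) [IsProbabilityMeasure μ]
    (J : X × Θ → ℝ) (hJmeas : Measurable J) (hJnn : ∀ p, 0 ≤ J p)
    (hJpos : ∀ᵐ p ∂(ν.prod μ), 0 < J p)
    (hJlogint : Integrable (fun p : X × Θ => J p * Real.log (J p)) (ν.prod μ))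
    (hdisint : ∀ g : X × Θ → ℝ, Measurable g → (∃ C : ℝ, ∀ p, |g p| ≤ C) →
      ∫ p, g p ∂νhat = ∫ x, ∫ θ, g (x, θ) * J (x, θ) ∂μ ∂ν) :
    (-∫ x, ∫ θ, Real.log (J (x, θ)) * J (x, θ) ∂μ ∂ν) ≤ varEntropy τ μ ν ∧
    varEntropy τ μ ν ≤ 0 := by
  subst hν
  exact average_entropy_le_var_entropy_le_zero_general hτ.measurable hhol
    hJmeas.aestronglyMeasurable (.of_forall hJnn) hJlogint hdisint
end
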